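/- Let β>0 and let f ∈ BV((0,1)). For every integer n≥2, every minimizer u_n ∈ PC_{1/n}(0,1) of DPMF_n(β,f,(0,1),·) satisfies |Du_n|((0,1)) ≤ |Df|((0,1)), i.e. the total variation of any minimizer does not exceed the total variation of the forcing term. -/

import Mathlib

open MeasureTheory Filter Set

namespace PeronaMalik

/-- `a_{δ,*} = δ⌊a/δ⌋`, the lower `δ`-approximation of `a`. -/
noncomputable def lowGrid (δ a : ℝ) : ℝ := δ * (⌊a / δ⌋ : ℤ)

/-- `b_δ^* = δ⌈b/δ⌉`, the upper `δ`-approximation of `b`. -/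
noncomputable def highGrid (δ b : ℝ) : ℝ := δ * (⌈b / δ⌉ : ℤ)

/-- `u` is piecewise constant at scale `δ`: constant on every interval `[zδ, (z+1)δ)`. -/
def IsPC (δ : ℝ) (u : ℝ → ℝ) : Prop :=
  ∀ z : ℤ, ∀ x ∈ Set.Ico ((z : ℝ) * δ) (((z : ℝ) + 1) * δ), u x = u ((z : ℝ) * δ)

/-- Discrete derivative `D^δ u (x) = (u(x+δ) - u(x))/δ`. -/
noncomputable def Dd (δ : ℝ) (u : ℝ → ℝ) (x : ℝ) : ℝ := (u (x + δ) - u x) / δ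

/-- The discrete Perona–Malik functional with fidelity term on `(a,b)`. -/
noncomputable def DPMF (n : ℕ) (β : ℝ) (f : ℝ → ℝ) (a b : ℝ) (u : ℝ → ℝ) : ℝ :=
  (∫ x in lowGrid (1 / (n : ℝ)) a..(highGrid (1 / (n : ℝ)) b - 1 / (n : ℝ)),
      Real.log (1 + (Dd (1 / (n : ℝ)) u x) ^ 2)) +
    β * ∫ x in a..b, (u x - f x) ^ 2

/-- `u` is a minimizer of `DPMF n β f (0,1)` over `PC_{1/n}(0,1)`. -/
def IsMinimizer (n : ℕ) (β : ℝ) (f : ℝ → ℝ) (u : ℝ → ℝ) : Prop :=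
  IsPC (1 / (n : ℝ)) u ∧
    ∀ v : ℝ → ℝ, IsPC (1 / (n : ℝ)) v → DPMF n β f 0 1 u ≤ DPMF n β f 0 1 v

/-- `m(n,β,f)`, the minimum value of the discrete Perona–Malik functional. -/
noncomputable def mval (n : ℕ) (β : ℝ) (f : ℝ → ℝ) : ℝ :=
  sInf ((fun u => DPMF n β f 0 1 u) '' {u | IsPC (1 / (n : ℝ)) u})

/-- `ω(n) = (log n / n)^{1/3}`. -/
noncomputable def omg (n : ℕ) : ℝ := (Real.log n / n) ^ ((1 : ℝ) / 3)

/-- `δ(n) = 1/(n ω(n))`. -/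
noncomputable def dlt (n : ℕ) : ℝ := 1 / ((n : ℝ) * omg n)

/-- The rescaled discrete Perona–Malik functional. -/
noncomputable def RDPM (n : ℕ) (a b : ℝ) (u : ℝ → ℝ) : ℝ :=
  (1 / omg n ^ 2) *
    ∫ x in lowGrid (dlt n) a..(highGrid (dlt n) b - dlt n),
      Real.log (1 + (Dd (dlt n) u x) ^ 2)

/-- The rescaled discrete Perona–Malik functional with fidelity term. -/
noncomputable def RDPMF (n : ℕ) (β : ℝ) (f : ℝ → ℝ) (a b : ℝ) (u : ℝ → ℝ) : ℝ :=
  RDPM n a b u + β * ∫ x in Set.Ioo a b, (u x - f x) ^ 2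

/-- `u` is a step function with finitely many jumps on `(a,b)`. -/
def IsStep (a b : ℝ) (u : ℝ → ℝ) : Prop :=
  ∃ (s : Finset ℝ) (c : ℝ) (J : ℝ → ℝ),
    (∀ p ∈ s, p ∈ Set.Ioo a b ∧ J p ≠ 0) ∧
    ∀ x ∈ Set.Ioo a b, u x = c + ∑ p ∈ s, (if p ≤ x then J p else 0)

/-- The set of jump (discontinuity) points of `u` inside `(a,b)`. -/
def jumpSet (a b : ℝ) (u : ℝ → ℝ) : Set ℝ :=
  {x ∈ Set.Ioo a b | ¬ ContinuousAt u x}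

/-- The limit functional `JF(α,β,f,(a,b),u) = α·#jumps + β∫(u-f)²`. -/
noncomputable def JF (α β : ℝ) (f : ℝ → ℝ) (a b : ℝ) (u : ℝ → ℝ) : ℝ :=
  α * ((jumpSet a b u).ncard : ℝ) + β * ∫ x in Set.Ioo a b, (u x - f x) ^ 2

/-- Strict convergence in `BV((a,b))`: `L¹` convergence plus convergence of
total variations. -/
def StrictBV (useq : ℕ → ℝ → ℝ) (u : ℝ → ℝ) (a b : ℝ) : Prop :=
  Tendsto (fun k => ∫ x in Set.Ioo a b, |useq k x - u x|) atTop (nhds 0) ∧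
  Tendsto (fun k => eVariationOn (useq k) (Set.Ioo a b)) atTop
    (nhds (eVariationOn u (Set.Ioo a b)))

/-- Locally strict convergence in `BV_loc(ℝ)`: strict convergence on every bounded
interval whose endpoints are not jump points of the limit. -/
def LocStrictBV (useq : ℕ → ℝ → ℝ) (u : ℝ → ℝ) : Prop :=
  ∀ a b : ℝ, a < b → ContinuousAt u a → ContinuousAt u b → StrictBV useq u a b

/-- `S(x) = 2⌊(x+1)/2⌋`. -/
noncomputable def stairS (x : ℝ) : ℝ := 2 * (⌊(x + 1) / 2⌋ : ℤ)

/-- The canonical `(H,V)`-staircase `S_{H,V}(x) = V·S(x/H)`. -/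
noncomputable def canStair (H V : ℝ) (x : ℝ) : ℝ := V * stairS (x / H)

/-- Oblique translations of the canonical `(H,V)`-staircase. -/
def Obl (H V : ℝ) (v : ℝ → ℝ) : Prop :=
  ∃ τ ∈ Set.Icc (-1 : ℝ) 1, ∀ x, v x = canStair H V (x - H * τ) + V * τ

/-- Graph translations of horizontal type of the canonical `(H,V)`-staircase. -/
def Orz (H V : ℝ) (v : ℝ → ℝ) : Prop :=
  ∃ τ ∈ Set.Icc (-1 : ℝ) 1, ∀ x, v x = canStair H V (x - H * τ)

/-- `μ_n(β,L,M)`: minimum of the rescaled functional with affine forcing term. -/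
noncomputable def muDisc (n : ℕ) (β L M : ℝ) : ℝ :=
  sInf ((fun u => RDPMF n β (fun x => M * x) 0 L u) '' {u | IsPC (dlt n) u})

/-- `μ*_n(β,L,M)`: same as `μ_n` but with boundary conditions `u(0)=0`, `u(L^*)=ML`. -/
noncomputable def muDiscStar (n : ℕ) (β L M : ℝ) : ℝ :=
  sInf ((fun u => RDPMF n β (fun x => M * x) 0 L u) ''
    {u | IsPC (dlt n) u ∧ u 0 = 0 ∧ u (highGrid (dlt n) L - dlt n) = M * L})

/-- `μ(α,β,L,M)`: minimum of the limit functional with affine forcing term. -/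
noncomputable def muLim (α β L M : ℝ) : ℝ :=
  sInf ((fun u => JF α β (fun x => M * x) 0 L u) '' {u | IsStep 0 L u})

/-- `μ*(α,β,L,M)`: same as `μ` but with boundary values `u(0⁺)=0`, `u(L⁻)=ML`. -/
noncomputable def muLimStar (α β L M : ℝ) : ℝ :=
  sInf ((fun u => JF α β (fun x => M * x) 0 L u) ''
    {u | IsStep 0 L u ∧ Tendsto u (nhdsWithin 0 (Set.Ioi 0)) (nhds 0) ∧
         Tendsto u (nhdsWithin L (Set.Iio L)) (nhds (M * L))})

/-- `u` and `v` have the same boundary values `u(a⁺)=v(a⁺)`, `u(b⁻)=v(b⁻)`. -/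
def SameBdry (a b : ℝ) (u v : ℝ → ℝ) : Prop :=
  (∀ c : ℝ, Tendsto v (nhdsWithin a (Set.Ioi a)) (nhds c) →
     Tendsto u (nhdsWithin a (Set.Ioi a)) (nhds c)) ∧
  (∀ c : ℝ, Tendsto v (nhdsWithin b (Set.Iio b)) (nhds c) →
     Tendsto u (nhdsWithin b (Set.Iio b)) (nhds c))

/-- `v` is a local minimizer for `JF(α,β,f,(a,b),·)` among step functions with the
same boundary values. -/
def IsLocalMinJF (α β : ℝ) (f : ℝ → ℝ) (a b : ℝ) (v : ℝ → ℝ) : Prop :=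
  IsStep a b v ∧
  ∀ u : ℝ → ℝ, IsStep a b u → SameBdry a b u v → JF α β f a b v ≤ JF α β f a b u

/-- `v` is an entire local minimizer for `JF(α,β,f,·,·)`. -/
def IsEntireLocalMinJF (α β : ℝ) (f : ℝ → ℝ) (v : ℝ → ℝ) : Prop :=
  ∀ a b : ℝ, a < b → IsLocalMinJF α β f a b v

/-- `v` is a local minimizer for `RDPMF_n(β,f,(a,b),·)` among piecewise constant
functions with the same boundary values. -/
def IsLocalMinRDPMF (n : ℕ) (β : ℝ) (f : ℝ → ℝ) (a b : ℝ) (v : ℝ → ℝ) : Prop :=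
  IsPC (dlt n) v ∧
  ∀ u : ℝ → ℝ, IsPC (dlt n) u →
    u (lowGrid (dlt n) a) = v (lowGrid (dlt n) a) →
    u (highGrid (dlt n) b - dlt n) = v (highGrid (dlt n) b - dlt n) →
    RDPMF n β f a b v ≤ RDPMF n β f a b u

/-!
Let `s` be the sign of the jump of a minimizer `u` at each interior grid point, and `0` at the two
ends. Minimality is tested in the single direction `w k = s (k + 1) - s k`, the negative of a
subgradient of the total variation at `u`. Where `u` jumps, `s = ±1` is extremal, so `w` changes in
the sense opposite to the jump, and `log (1 + p²)` then grows at most quadratically in the size of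
the perturbation. Only the fidelity term contributes at first order, whence `0 ≤ ∑ w (u - F)` with
`F` the cell averages of `f`. Summation by parts turns the right-hand side into `-∑ |Δu| + ∑ s ΔF ≤
-∑ |Δu| + ∑ |ΔF|`, and averaging over cells does not increase the variation.
-/

/-! ### The discrete problem -/

/-- The energy of a sequence with values `U 0, …, U m`: a potential `φ` of the `m` increments, plus
a quadratic fidelity to the data `F`. -/
def discreteEnergy (φ : ℝ → ℝ) (β : ℝ) (m : ℕ) (F U : ℕ → ℝ) : ℝ :=
  ∑ i ∈ Finset.range m, φ (U (i + 1) - U i) + β * ∑ i ∈ Finset.range (m + 1), (U i - F i) ^ 2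

/-- The sign of the jump of `U` from `i - 1` to `i` for `1 ≤ i ≤ m`, and `0` for all other `i`. -/
noncomputable def jumpSign (m : ℕ) (U : ℕ → ℝ) : ℕ → ℝ
  | 0 => 0
  | i + 1 => if i < m then SignType.sign (U (i + 1) - U i) else 0

/-- The negative of a subgradient at `U` of the total variation `∑ i < m, |U (i + 1) - U i|`, used
as the direction in which minimality of `U` is tested. -/
noncomputable def variationDescent (m : ℕ) (U : ℕ → ℝ) (i : ℕ) : ℝ :=
  jumpSign m U (i + 1) - jumpSign m U i

lemma abs_jumpSign_le_one (m : ℕ) (U : ℕ → ℝ) (i : ℕ) : |jumpSign m U i| ≤ 1 := by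
  rcases i with _ | i
  · simp [jumpSign]
  · rw [jumpSign]
    split_ifs
    · rcases lt_trichotomy (U (i + 1) - U i) 0 with h | h | h <;> simp [h]
    · simp

lemma jumpSign_succ {m : ℕ} (U : ℕ → ℝ) {i : ℕ} (hi : i < m) :
    jumpSign m U (i + 1) = SignType.sign (U (i + 1) - U i) :=
  if_pos hi

lemma sub_mul_variationDescent_sub_nonpos {m : ℕ} (U : ℕ → ℝ) {i : ℕ} (hi : i < m) :
    (U (i + 1) - U i) * (variationDescent m U (i + 1) - variationDescent m U i) ≤ 0 := by
  have hprev := abs_le.1 (abs_jumpSign_le_one m U i)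
  have hnext := abs_le.1 (abs_jumpSign_le_one m U (i + 2))
  simp only [variationDescent, jumpSign_succ U hi]
  rcases lt_trichotomy (U (i + 1) - U i) 0 with h | h | h
  · rw [sign_neg h, SignType.coe_neg, SignType.coe_one]
    exact mul_nonpos_of_nonpos_of_nonneg h.le (by linarith)
  · simp [h]
  · rw [sign_pos h, SignType.coe_one]
    exact mul_nonpos_of_nonneg_of_nonpos h.le (by linarith)

lemma sum_variationDescent_mul (m : ℕ) (U G : ℕ → ℝ) :
    ∑ i ∈ Finset.range (m + 1), variationDescent m U i * G i =
      -∑ i ∈ Finset.range m, jumpSign m U (i + 1) * (G (i + 1) - G i) := by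
  have hparts := Finset.sum_range_by_parts G (variationDescent m U) (m + 1)
  have htel (k : ℕ) : ∑ i ∈ Finset.range k, variationDescent m U i = jumpSign m U k :=
    (Finset.sum_range_sub (jumpSign m U) k).trans (sub_zero _)
  have hend : jumpSign m U (m + 1) = 0 := if_neg (lt_irrefl m)
  simp only [htel, hend, smul_eq_mul, mul_zero, zero_sub, Nat.add_sub_cancel] at hparts
  simpa only [mul_comm] using hparts

lemma discreteEnergy_add_le {φ : ℝ → ℝ} {C : ℝ}
    (hφ : ∀ d e, d * e ≤ 0 → φ (d + e) ≤ φ d + C * e ^ 2) (β : ℝ) {m : ℕ} (F : ℕ → ℝ)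
    {U W : ℕ → ℝ} (hW : ∀ i < m, (U (i + 1) - U i) * (W (i + 1) - W i) ≤ 0) :
    discreteEnergy φ β m F (U + W) ≤ discreteEnergy φ β m F U +
      2 * β * ∑ i ∈ Finset.range (m + 1), W i * (U i - F i) +
      (C * ∑ i ∈ Finset.range m, (W (i + 1) - W i) ^ 2 +
        β * ∑ i ∈ Finset.range (m + 1), W i ^ 2) := by
  have hpotential : ∑ i ∈ Finset.range m, φ ((U + W) (i + 1) - (U + W) i) ≤
      ∑ i ∈ Finset.range m, φ (U (i + 1) - U i) +
        C * ∑ i ∈ Finset.range m, (W (i + 1) - W i) ^ 2 := by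
    rw [Finset.mul_sum, ← Finset.sum_add_distrib]
    refine Finset.sum_le_sum fun i hi => ?_
    simpa only [Pi.add_apply, add_sub_add_comm] using hφ _ _ (hW i (Finset.mem_range.1 hi))
  have hfidelity : ∑ i ∈ Finset.range (m + 1), ((U + W) i - F i) ^ 2 =
      ∑ i ∈ Finset.range (m + 1), (U i - F i) ^ 2 +
        2 * ∑ i ∈ Finset.range (m + 1), W i * (U i - F i) +
        ∑ i ∈ Finset.range (m + 1), W i ^ 2 := by
    rw [Finset.mul_sum, ← Finset.sum_add_distrib, ← Finset.sum_add_distrib]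
    refine Finset.sum_congr rfl fun i _ => ?_
    rw [Pi.add_apply]
    ring
  simp only [discreteEnergy, hfidelity]
  linarith

lemma sum_mul_sub_nonneg_of_forall_discreteEnergy_le {φ : ℝ → ℝ} {C : ℝ}
    (hφ : ∀ d e, d * e ≤ 0 → φ (d + e) ≤ φ d + C * e ^ 2) {β : ℝ} (hβ : 0 < β) {m : ℕ}
    {F U W : ℕ → ℝ} (hU : ∀ V, discreteEnergy φ β m F U ≤ discreteEnergy φ β m F V)
    (hW : ∀ i < m, (U (i + 1) - U i) * (W (i + 1) - W i) ≤ 0) :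
    0 ≤ ∑ i ∈ Finset.range (m + 1), W i * (U i - F i) := by
  set I := ∑ i ∈ Finset.range (m + 1), W i * (U i - F i)
  set Q := C * ∑ i ∈ Finset.range m, (W (i + 1) - W i) ^ 2 +
    β * ∑ i ∈ Finset.range (m + 1), W i ^ 2 with hQ
  have hpos : ∀ t > 0, 0 ≤ 2 * β * I + t * Q := by
    intro t ht
    have htW : ∀ i < m, (U (i + 1) - U i) * ((t • W) (i + 1) - (t • W) i) ≤ 0 := fun i hi => by
      simpa only [Pi.smul_apply, smul_eq_mul, ← mul_sub, mul_left_comm _ t] using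
        mul_nonpos_of_nonneg_of_nonpos ht.le (hW i hi)
    have hle := (hU (U + t • W)).trans (discreteEnergy_add_le hφ β F htW)
    simp only [Pi.smul_apply, smul_eq_mul, ← mul_sub, mul_pow, mul_assoc t, ← Finset.mul_sum] at hle
    refine nonneg_of_mul_nonneg_right (?_ : 0 ≤ t * _) ht
    rw [hQ]
    linarith
  have hlim : Tendsto (fun t => 2 * β * I + t * Q) (nhdsWithin 0 (Ioi 0)) (nhds (2 * β * I)) := by
    refine Tendsto.mono_left ?_ nhdsWithin_le_nhds
    exact Continuous.tendsto' (by fun_prop) _ _ (by ring)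
  have hI : 0 ≤ 2 * β * I := ge_of_tendsto hlim (eventually_mem_nhdsWithin.mono hpos)
  exact nonneg_of_mul_nonneg_right hI (by positivity)

theorem sum_abs_sub_le_of_forall_discreteEnergy_le {φ : ℝ → ℝ} {C : ℝ}
    (hφ : ∀ d e, d * e ≤ 0 → φ (d + e) ≤ φ d + C * e ^ 2) {β : ℝ} (hβ : 0 < β) {m : ℕ}
    {F U : ℕ → ℝ} (hU : ∀ V, discreteEnergy φ β m F U ≤ discreteEnergy φ β m F V) :
    ∑ i ∈ Finset.range m, |U (i + 1) - U i| ≤ ∑ i ∈ Finset.range m, |F (i + 1) - F i| := by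
  have hdescent : 0 ≤ ∑ i ∈ Finset.range (m + 1), variationDescent m U i * (U i - F i) :=
    sum_mul_sub_nonneg_of_forall_discreteEnergy_le hφ hβ hU fun _ hi =>
      sub_mul_variationDescent_sub_nonpos U hi
  have hsign (i : ℕ) (hi : i < m) : |U (i + 1) - U i| - |F (i + 1) - F i| ≤
      jumpSign m U (i + 1) * ((U (i + 1) - F (i + 1)) - (U i - F i)) := by
    have hU : jumpSign m U (i + 1) * (U (i + 1) - U i) = |U (i + 1) - U i| := by
      rw [jumpSign_succ U hi, sign_mul_self]
    have hF : jumpSign m U (i + 1) * (F (i + 1) - F i) ≤ |F (i + 1) - F i| := by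
      refine (le_abs_self _).trans ?_
      rw [abs_mul]
      exact mul_le_of_le_one_left (abs_nonneg _) (abs_jumpSign_le_one m U _)
    linarith
  rw [sum_variationDescent_mul m U fun i => U i - F i] at hdescent
  have hsum := Finset.sum_le_sum fun i hi => hsign i (Finset.mem_range.1 hi)
  rw [Finset.sum_sub_distrib] at hsum
  linarith

lemma log_one_add_add_sq_le {d e : ℝ} (hde : d * e ≤ 0) :
    Real.log (1 + (d + e) ^ 2) ≤ Real.log (1 + d ^ 2) + e ^ 2 := by
  have hprod : 1 + (d + e) ^ 2 ≤ (1 + d ^ 2) * (1 + e ^ 2) := by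
    nlinarith [sq_nonneg (d * e)]
  calc Real.log (1 + (d + e) ^ 2)
      ≤ Real.log ((1 + d ^ 2) * (1 + e ^ 2)) := Real.log_le_log (by positivity) hprod
    _ = Real.log (1 + d ^ 2) + Real.log (1 + e ^ 2) := Real.log_mul (by positivity) (by positivity)
    _ ≤ Real.log (1 + d ^ 2) + e ^ 2 := by
        linarith [Real.log_le_sub_one_of_pos (show 0 < 1 + e ^ 2 by positivity)]

/-! ### Integration over cells -/

lemma integral_sub_sq_eq_average {α : Type*} [MeasurableSpace α] {μ : Measure α}
    [IsFiniteMeasure μ] {g : α → ℝ} (hg : MemLp g 2 μ) (c : ℝ) :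
    ∫ x, (c - g x) ^ 2 ∂μ =
      μ.real univ * (c - ⨍ y, g y ∂μ) ^ 2 + ∫ x, ((⨍ y, g y ∂μ) - g x) ^ 2 ∂μ := by
  set A := ⨍ y, g y ∂μ
  have hdev : MemLp (fun x => A - g x) 2 μ := (memLp_const A).sub hg
  have hmean : ∫ x, (A - g x) ∂μ = 0 := integral_average_sub (hg.integrable one_le_two)
  have hexpand (x : α) :
      (c - g x) ^ 2 = (c - A) ^ 2 + 2 * (c - A) * (A - g x) + (A - g x) ^ 2 := by ring
  have hcross : Integrable (fun x => 2 * (c - A) * (A - g x)) μ :=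
    (hdev.integrable one_le_two).const_mul _
  have hlin : Integrable (fun x => (c - A) ^ 2 + 2 * (c - A) * (A - g x)) μ :=
    (integrable_const _).add hcross
  simp only [hexpand]
  rw [integral_add hlin hdev.integrable_sq, integral_add (integrable_const _) hcross,
    integral_const_mul, hmean, integral_const, smul_eq_mul, mul_zero, add_zero]

lemma integral_zero_nat_mul_eq_sum {g : ℝ → ℝ} {δ : ℝ} (hδ : 0 ≤ δ) {n : ℕ}
    (hg : ∀ i < n, IntegrableOn (fun x => g (i * δ + x)) (Ioo 0 δ)) :
    ∫ x in (0 : ℝ)..n * δ, g x = ∑ i ∈ Finset.range n, ∫ x in Ioo 0 δ, g (i * δ + x) := by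
  have hcell : ∀ i < n, IntervalIntegrable g volume (i * δ) ((i + 1 : ℕ) * δ) := by
    intro i hi
    have hshift := ((intervalIntegrable_iff_integrableOn_Ioo_of_le hδ).2 (hg i hi)).comp_add_left
      (-(i * δ))
    simp only [add_neg_cancel_left] at hshift
    convert hshift using 1 <;> push_cast <;> ring
  have hsum := intervalIntegral.sum_integral_adjacent_intervals (a := fun i : ℕ => i * δ) hcell
  rw [Nat.cast_zero, zero_mul] at hsum
  rw [← hsum]
  refine Finset.sum_congr rfl fun i _ => ?_
  rw [← integral_Ioc_eq_integral_Ioo, ← intervalIntegral.integral_of_le hδ,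
    intervalIntegral.integral_comp_add_left, add_zero, Nat.cast_succ, add_one_mul]

lemma nat_mul_add_mem_Ioo {δ : ℝ} {i n : ℕ} (hi : i < n) {x : ℝ} (hx : x ∈ Ioo 0 δ) :
    i * δ + x ∈ Ioo 0 (n * δ) := by
  have hδ : 0 < δ := hx.1.trans hx.2
  have hle : ((i : ℝ) + 1) * δ ≤ n * δ := by
    gcongr
    exact_mod_cast hi
  have hnonneg : 0 ≤ i * δ := by positivity
  exact ⟨by linarith [hx.1], by linarith [hx.2]⟩

lemma memLp_comp_nat_mul_add {f : ℝ → ℝ} {p : ENNReal} {δ : ℝ} {n : ℕ}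
    (hf : MemLp f p (volume.restrict (Ioo 0 (n * δ)))) {i : ℕ} (hi : i < n) :
    MemLp (fun x => f (i * δ + x)) p (volume.restrict (Ioo 0 δ)) := by
  have hshift := (measurePreserving_add_left volume (i * δ)).restrict_preimage
    (measurableSet_Ioo (a := (0 : ℝ)) (b := n * δ))
  refine (hf.comp_measurePreserving hshift).mono_measure (Measure.restrict_mono ?_ le_rfl)
  exact fun x hx => nat_mul_add_mem_Ioo hi hx

/-- The average of `f` over the cell `(iδ, (i+1)δ)`, computed on the translate to `(0, δ)` so that
the averages over different cells are integrals over the same set. -/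
noncomputable def cellMean (δ : ℝ) (f : ℝ → ℝ) (i : ℕ) : ℝ := ⨍ x in Ioo 0 δ, f (i * δ + x)

lemma mul_abs_cellMean_sub_cellMean_le {f : ℝ → ℝ} {δ : ℝ} (hδ : 0 < δ) {i j : ℕ}
    (hi : IntegrableOn (fun x => f (i * δ + x)) (Ioo 0 δ))
    (hj : IntegrableOn (fun x => f (j * δ + x)) (Ioo 0 δ)) :
    δ * |cellMean δ f i - cellMean δ f j| ≤ ∫ x in Ioo 0 δ, |f (i * δ + x) - f (j * δ + x)| := by
  have hmean (k : ℕ) : δ * cellMean δ f k = ∫ x in Ioo 0 δ, f (k * δ + x) := by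
    rw [cellMean, setAverage_eq, Real.volume_real_Ioo_of_le hδ.le, sub_zero, smul_eq_mul,
      mul_inv_cancel_left₀ hδ.ne']
  calc δ * |cellMean δ f i - cellMean δ f j|
      = |δ * cellMean δ f i - δ * cellMean δ f j| := by rw [← mul_sub, abs_mul, abs_of_pos hδ]
    _ = |∫ x in Ioo 0 δ, (f (i * δ + x) - f (j * δ + x))| := by
        rw [hmean, hmean, integral_sub hi hj]
    _ ≤ ∫ x in Ioo 0 δ, |f (i * δ + x) - f (j * δ + x)| := abs_integral_le_integral_abs

/-! ### Functions of bounded variation -/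

lemma memLp_restrict_of_boundedVariationOn {f : ℝ → ℝ} {s : Set ℝ} (hs : MeasurableSet s)
    (hf : BoundedVariationOn f s) {μ : Measure ℝ} [IsFiniteMeasure (μ.restrict s)] (p : ENNReal) :
    MemLp f p (μ.restrict s) := by
  rcases s.eq_empty_or_nonempty with rfl | ⟨c, hc⟩
  · rw [Measure.restrict_empty]
    exact memLp_measure_zero
  have hmeas : AEMeasurable f (μ.restrict s) := by
    obtain ⟨q, r, hq, hr, rfl⟩ := hf.locallyBoundedVariationOn.exists_monotoneOn_sub_monotoneOn
    exact (aemeasurable_restrict_of_monotoneOn hs hq).sub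
      (aemeasurable_restrict_of_monotoneOn hs hr)
  refine MemLp.of_bound hmeas.aestronglyMeasurable ((eVariationOn f s).toReal + ‖f c‖) ?_
  filter_upwards [ae_restrict_mem hs] with x hx
  have hdist : ‖f x - f c‖ ≤ (eVariationOn f s).toReal := by
    rw [← dist_eq_norm]
    exact hf.dist_le hx hc
  linarith [norm_sub_norm_le (f x) (f c)]

lemma sum_abs_sub_le_eVariationOn {f : ℝ → ℝ} {s : Set ℝ} (hf : BoundedVariationOn f s) {m : ℕ}
    {a : ℕ → ℝ} (ha : MonotoneOn a (Iic m)) (has : ∀ i ≤ m, a i ∈ s) :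
    ∑ i ∈ Finset.range m, |f (a (i + 1)) - f (a i)| ≤ (eVariationOn f s).toReal := by
  rw [← ENNReal.ofReal_le_iff_le_toReal hf, ENNReal.ofReal_sum_of_nonneg fun i _ => abs_nonneg _]
  simpa only [edist_dist, Real.dist_eq] using eVariationOn.sum_le_of_monotoneOn_Iic (f := f) ha has

lemma sum_abs_sub_cellMean_le {f : ℝ → ℝ} {δ : ℝ} (hδ : 0 < δ) {m : ℕ}
    (hf : BoundedVariationOn f (Ioo 0 ((m + 1 : ℕ) * δ))) :
    ∑ i ∈ Finset.range m, |cellMean δ f (i + 1) - cellMean δ f i| ≤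
      (eVariationOn f (Ioo 0 ((m + 1 : ℕ) * δ))).toReal := by
  set V := (eVariationOn f (Ioo 0 ((m + 1 : ℕ) * δ))).toReal
  set g : ℕ → ℝ → ℝ := fun i x => f (i * δ + x)
  have hg (i : ℕ) (hi : i < m + 1) : IntegrableOn (g i) (Ioo 0 δ) :=
    (memLp_comp_nat_mul_add (memLp_restrict_of_boundedVariationOn measurableSet_Ioo hf 1)
      hi).integrable le_rfl
  have hincr (i : ℕ) (hi : i ∈ Finset.range m) :
      IntegrableOn (fun x => |g (i + 1) x - g i x|) (Ioo 0 δ) := by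
    rw [Finset.mem_range] at hi
    exact ((hg (i + 1) (by omega)).sub (hg i (by omega))).abs
  have hmean (i : ℕ) (hi : i ∈ Finset.range m) : δ * |cellMean δ f (i + 1) - cellMean δ f i| ≤
      ∫ x in Ioo 0 δ, |g (i + 1) x - g i x| := by
    rw [Finset.mem_range] at hi
    exact mul_abs_cellMean_sub_cellMean_le hδ (hg (i + 1) (by omega)) (hg i (by omega))
  have hpath (x : ℝ) (hx : x ∈ Ioo 0 δ) : ∑ i ∈ Finset.range m, |g (i + 1) x - g i x| ≤ V := by
    refine sum_abs_sub_le_eVariationOn hf (a := fun i : ℕ => i * δ + x) ?_ ?_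
    · intro i _ j _ hij
      dsimp only
      gcongr
    · exact fun i hi => nat_mul_add_mem_Ioo (Nat.lt_succ_of_le hi) hx
  refine le_of_mul_le_mul_left ?_ hδ
  calc δ * ∑ i ∈ Finset.range m, |cellMean δ f (i + 1) - cellMean δ f i|
      ≤ ∑ i ∈ Finset.range m, ∫ x in Ioo 0 δ, |g (i + 1) x - g i x| := by
        rw [Finset.mul_sum]
        exact Finset.sum_le_sum hmean
    _ = ∫ x in Ioo 0 δ, ∑ i ∈ Finset.range m, |g (i + 1) x - g i x| :=
        (integral_finsetSum _ hincr).symm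
    _ ≤ ∫ _ in Ioo 0 δ, V :=
        setIntegral_mono_on (integrable_finsetSum _ hincr) (integrable_const V) measurableSet_Ioo
          hpath
    _ = δ * V := by
        rw [setIntegral_const, Real.volume_real_Ioo_of_le hδ.le, sub_zero, smul_eq_mul]

/-! ### Piecewise constant functions -/

lemma IsPC.apply_nat_mul_add {δ : ℝ} {u : ℝ → ℝ} (hu : IsPC δ u) (i : ℕ) {x : ℝ}
    (hx : x ∈ Ico 0 δ) : u (i * δ + x) = u (i * δ) := by
  refine hu i (i * δ + x) ⟨?_, ?_⟩ <;> push_cast <;> linarith [hx.1, hx.2]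

lemma IsPC.comp_Dd {δ : ℝ} {u : ℝ → ℝ} (hu : IsPC δ u) (φ : ℝ → ℝ) :
    IsPC δ fun x => φ (Dd δ u x) := by
  intro z x hx
  have hnext : ∀ y ∈ Ico (z * δ) ((z + 1) * δ), u (y + δ) = u ((z + 1) * δ) := by
    intro y hy
    have := hu (z + 1) (y + δ)
    push_cast at this
    exact this ⟨by linarith [hy.1], by linarith [hy.2]⟩
  have hleft : z * δ ∈ Ico (z * δ) ((z + 1) * δ) := ⟨le_rfl, hx.1.trans_lt hx.2⟩
  simp only [Dd, hu z x hx, hnext x hx, hnext _ hleft]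

lemma IsPC.integral_eq {δ : ℝ} (hδ : 0 ≤ δ) {u : ℝ → ℝ} (hu : IsPC δ u) (n : ℕ) :
    ∫ x in (0 : ℝ)..n * δ, u x = δ * ∑ i ∈ Finset.range n, u (i * δ) := by
  have hcell (i : ℕ) : EqOn (fun x => u (i * δ + x)) (fun _ => u (i * δ)) (Ioo 0 δ) :=
    fun x hx => hu.apply_nat_mul_add i (Ioo_subset_Ico_self hx)
  rw [integral_zero_nat_mul_eq_sum hδ fun i _ =>
    (integrableOn_congr_fun (hcell i) measurableSet_Ioo).2 (integrable_const _), Finset.mul_sum]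
  refine Finset.sum_congr rfl fun i _ => ?_
  rw [setIntegral_congr_fun measurableSet_Ioo (hcell i), setIntegral_const,
    Real.volume_real_Ioo_of_le hδ, sub_zero, smul_eq_mul]

lemma IsPC.integral_sub_sq_eq {δ : ℝ} (hδ : 0 ≤ δ) {u f : ℝ → ℝ} (hu : IsPC δ u) {n : ℕ}
    (hf : MemLp f 2 (volume.restrict (Ioo 0 (n * δ)))) :
    ∫ x in (0 : ℝ)..n * δ, (u x - f x) ^ 2 =
      δ * ∑ i ∈ Finset.range n, (u (i * δ) - cellMean δ f i) ^ 2 +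
        ∑ i ∈ Finset.range n, ∫ x in Ioo 0 δ, (cellMean δ f i - f (i * δ + x)) ^ 2 := by
  have hcell (i : ℕ) : EqOn (fun x => (u (i * δ + x) - f (i * δ + x)) ^ 2)
      (fun x => (u (i * δ) - f (i * δ + x)) ^ 2) (Ioo 0 δ) := fun x hx => by
    simp only [hu.apply_nat_mul_add i (Ioo_subset_Ico_self hx)]
  rw [integral_zero_nat_mul_eq_sum hδ fun i hi =>
      (integrableOn_congr_fun (hcell i) measurableSet_Ioo).2
        ((memLp_const _).sub (memLp_comp_nat_mul_add hf hi)).integrable_sq,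
    Finset.mul_sum, ← Finset.sum_add_distrib]
  refine Finset.sum_congr rfl fun i hi => ?_
  rw [setIntegral_congr_fun measurableSet_Ioo (hcell i),
    integral_sub_sq_eq_average (memLp_comp_nat_mul_add hf (Finset.mem_range.1 hi)),
    measureReal_restrict_apply_univ, Real.volume_real_Ioo_of_le hδ, sub_zero]
  rfl

lemma IsPC.eVariationOn_le {δ : ℝ} (hδ : 0 < δ) {u : ℝ → ℝ} (hu : IsPC δ u) (m : ℕ) :
    eVariationOn u (Ioo 0 ((m + 1 : ℕ) * δ)) ≤
      ENNReal.ofReal (∑ i ∈ Finset.range m, |u ((i + 1 : ℕ) * δ) - u (i * δ)|) := by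
  set U : ℕ → ℝ := fun i => u (i * δ)
  have hfloor : EqOn u (U ∘ fun x => ⌊x / δ⌋₊) (Ioo 0 ((m + 1 : ℕ) * δ)) := by
    intro x hx
    have hle : ⌊x / δ⌋₊ * δ ≤ x := (le_div_iff₀ hδ).1 (Nat.floor_le (div_pos hx.1 hδ).le)
    have hlt : x < (⌊x / δ⌋₊ + 1) * δ := (div_lt_iff₀ hδ).1 (Nat.lt_floor_add_one _)
    exact hu ⌊x / δ⌋₊ x ⟨hle, hlt⟩
  have hmono : MonotoneOn (fun x => ⌊x / δ⌋₊) (Ioo 0 ((m + 1 : ℕ) * δ)) := fun _ _ _ _ hxy =>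
    Nat.floor_mono (div_le_div_of_nonneg_right hxy hδ.le)
  have hmaps : MapsTo (fun x => ⌊x / δ⌋₊) (Ioo 0 ((m + 1 : ℕ) * δ)) (id '' Iic m) := by
    intro x hx
    rw [image_id, mem_Iic, ← Nat.lt_succ_iff, Nat.floor_lt (div_pos hx.1 hδ).le, div_lt_iff₀ hδ]
    exact hx.2
  calc eVariationOn u (Ioo 0 ((m + 1 : ℕ) * δ))
      = eVariationOn (U ∘ fun x => ⌊x / δ⌋₊) (Ioo 0 ((m + 1 : ℕ) * δ)) :=
        eVariationOn.congr hfloor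
    _ ≤ eVariationOn U (id '' Iic m) := eVariationOn.comp_le_of_monotoneOn U _ hmono hmaps
    _ = ∑ i ∈ Finset.range m, ENNReal.ofReal |U (i + 1) - U i| := by
        rw [eVariationOn.image_range_of_monotone U monotone_id]
        simp only [id, edist_comm (U _) (U (_ + 1)), edist_dist, Real.dist_eq]
    _ = ENNReal.ofReal (∑ i ∈ Finset.range m, |U (i + 1) - U i|) :=
        (ENNReal.ofReal_sum_of_nonneg fun i _ => abs_nonneg _).symm

/-- The piecewise constant function with value `V i` on `[iδ, (i+1)δ)` for `i : ℕ`, extended by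
`V 0` to the negative reals. -/
noncomputable def stepFn (δ : ℝ) (V : ℕ → ℝ) (x : ℝ) : ℝ := V ⌊x / δ⌋₊

lemma stepFn_nat_mul {δ : ℝ} (hδ : δ ≠ 0) (V : ℕ → ℝ) (i : ℕ) : stepFn δ V (i * δ) = V i := by
  rw [stepFn, mul_div_cancel_right₀ _ hδ, Nat.floor_natCast]

lemma isPC_stepFn {δ : ℝ} (hδ : 0 < δ) (V : ℕ → ℝ) : IsPC δ (stepFn δ V) := by
  intro z x hx
  have hfloor : ⌊x / δ⌋ = z := by
    rw [Int.floor_eq_iff, le_div_iff₀ hδ, div_lt_iff₀ hδ]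
    exact hx
  rw [stepFn, stepFn, mul_div_cancel_right₀ _ hδ.ne', ← Int.floor_toNat, ← Int.floor_toNat, hfloor,
    Int.floor_intCast]

/-! ### Minimizers on a grid -/

/-- The energy on `(0, (m+1)δ)` whose potential `φ` acts on the discrete derivative at scale `δ`.
The Perona–Malik functional on `(0, 1)` is the case `φ p = log (1 + p²)`, `δ = 1 / (m + 1)`. -/
noncomputable def gridEnergy (φ : ℝ → ℝ) (β δ : ℝ) (m : ℕ) (f u : ℝ → ℝ) : ℝ :=
  (∫ x in (0 : ℝ)..m * δ, φ (Dd δ u x)) + β * ∫ x in (0 : ℝ)..(m + 1 : ℕ) * δ, (u x - f x) ^ 2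

lemma gridEnergy_eq_discreteEnergy_add (φ : ℝ → ℝ) (β : ℝ) {δ : ℝ} (hδ : 0 ≤ δ) {m : ℕ}
    {f u : ℝ → ℝ} (hf : MemLp f 2 (volume.restrict (Ioo 0 ((m + 1 : ℕ) * δ)))) (hu : IsPC δ u) :
    gridEnergy φ β δ m f u =
      discreteEnergy (fun d => δ * φ (d / δ)) (β * δ) m (cellMean δ f) (fun i => u (i * δ)) +
        β * ∑ i ∈ Finset.range (m + 1),
          ∫ x in Ioo 0 δ, (cellMean δ f i - f (i * δ + x)) ^ 2 := by
  rw [gridEnergy, (hu.comp_Dd φ).integral_eq hδ, hu.integral_sub_sq_eq hδ hf, discreteEnergy,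
    Finset.mul_sum]
  simp only [Dd, Nat.cast_succ, add_one_mul]
  ring

lemma DPMF_eq_gridEnergy (m : ℕ) (β : ℝ) (f u : ℝ → ℝ) :
    DPMF (m + 1) β f 0 1 u =
      gridEnergy (fun p => Real.log (1 + p ^ 2)) β (1 / (m + 1 : ℕ)) m f u := by
  have hm : ((m + 1 : ℕ) : ℝ) ≠ 0 := by positivity
  have hlow : lowGrid (1 / (m + 1 : ℕ)) 0 = 0 := by simp [lowGrid]
  have hhigh : highGrid (1 / (m + 1 : ℕ)) 1 = 1 := by
    rw [highGrid, one_div_one_div, Int.ceil_natCast, Int.cast_natCast, one_div_mul_cancel hm]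
  have hlast : (1 : ℝ) - 1 / (m + 1 : ℕ) = m * (1 / (m + 1 : ℕ)) := by
    field_simp
    push_cast
    ring
  rw [DPMF, gridEnergy, hlow, hhigh, hlast, mul_one_div_cancel hm]

theorem minimizer_variation_le_forcing_variation_general {φ : ℝ → ℝ} {C : ℝ}
    (hφ : ∀ d e, d * e ≤ 0 → φ (d + e) ≤ φ d + C * e ^ 2) {β : ℝ} (hβ : 0 < β) {δ : ℝ}
    (hδ : 0 < δ) {m : ℕ} {f u : ℝ → ℝ} (hu : IsPC δ u)
    (hmin : ∀ v, IsPC δ v → gridEnergy φ β δ m f u ≤ gridEnergy φ β δ m f v) :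
    eVariationOn u (Ioo 0 ((m + 1 : ℕ) * δ)) ≤ eVariationOn f (Ioo 0 ((m + 1 : ℕ) * δ)) := by
  rcases eq_or_ne (eVariationOn f (Ioo 0 ((m + 1 : ℕ) * δ))) ⊤ with htop | hf
  · exact htop ▸ le_top
  have hf2 := memLp_restrict_of_boundedVariationOn measurableSet_Ioo hf (μ := volume) 2
  have hgrowth (d e : ℝ) (hde : d * e ≤ 0) :
      δ * φ ((d + e) / δ) ≤ δ * φ (d / δ) + C / δ * e ^ 2 := by
    have hscaled : d / δ * (e / δ) ≤ 0 := by
      rw [div_mul_div_comm]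
      exact div_nonpos_of_nonpos_of_nonneg hde (by positivity)
    calc δ * φ ((d + e) / δ) ≤ δ * (φ (d / δ) + C * (e / δ) ^ 2) := by
          rw [add_div]
          exact mul_le_mul_of_nonneg_left (hφ _ _ hscaled) hδ.le
      _ = δ * φ (d / δ) + C / δ * e ^ 2 := by field_simp
  have hdiscrete (V : ℕ → ℝ) :
      discreteEnergy (fun d => δ * φ (d / δ)) (β * δ) m (cellMean δ f) (fun i => u (i * δ)) ≤
        discreteEnergy (fun d => δ * φ (d / δ)) (β * δ) m (cellMean δ f) V := by
    have hle := hmin (stepFn δ V) (isPC_stepFn hδ V)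
    rw [gridEnergy_eq_discreteEnergy_add φ β hδ.le hf2 hu,
      gridEnergy_eq_discreteEnergy_add φ β hδ.le hf2 (isPC_stepFn hδ V)] at hle
    simpa only [stepFn_nat_mul hδ.ne'] using le_of_add_le_add_right hle
  refine (hu.eVariationOn_le hδ m).trans ((ENNReal.ofReal_le_iff_le_toReal hf).2 ?_)
  exact (sum_abs_sub_le_of_forall_discreteEnergy_le hgrowth (by positivity) hdiscrete).trans
    (sum_abs_sub_cellMean_le hδ hf)

/-- For `β > 0` and `f ∈ BV((0,1))`, every minimizer of the discrete
Perona–Malik functional has total variation at most that of the forcing term `f`. -/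
theorem minimizer_variation_le_forcing_variation
    (β : ℝ) (hβ : 0 < β) (f : ℝ → ℝ)
    (hf : eVariationOn f (Set.Ioo (0 : ℝ) 1) ≠ ⊤)
    (n : ℕ) (hn : 2 ≤ n) (u : ℝ → ℝ) (hu : IsMinimizer n β f u) :
    eVariationOn u (Set.Ioo (0 : ℝ) 1) ≤ eVariationOn f (Set.Ioo (0 : ℝ) 1) := by
  obtain ⟨m, rfl⟩ := Nat.exists_eq_add_one_of_ne_zero (by omega : n ≠ 0)
  obtain ⟨hpc, hmin⟩ := hu
  simp only [DPMF_eq_gridEnergy] at hmin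
  simpa only [mul_one_div_cancel (show ((m + 1 : ℕ) : ℝ) ≠ 0 by positivity)] using
    minimizer_variation_le_forcing_variation_general (C := 1)
      (fun _ _ hde => (log_one_add_add_sq_le hde).trans_eq (by ring)) hβ (by positivity) hpc hmin

end PeronaMalik
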